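/- Fix an integer N ≥ 2 and let u : ℕ → ℝ be any bounded aperiodic sequence. Then for every ε > 0 there exists a subshift X ⊆ {0,1,...,N−1}^ℤ (a closed, shift-invariant subset, with the left shift S) whose topological entropy is greater than log N − ε, such that X is uncorrelated to u: lim_{M→∞} (1/M) Σ_{m≤M} f(S^m x) u(m) = 0 for every continuous f : X → ℂ and every x ∈ X. -/

import Mathlib

/-!
The subshift is built from codes `W 0, W 1, …` of words of length `n 0 ∣ n 1 ∣ …`. By Hoeffding's
inequality, all but a tiny proportion of the concatenations of `q k` words of `W k` have the
property that the fluctuations of any of finitely many patterns around their frequencies in `W k`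
are almost uncorrelated to `u` along all windows that start before the time `n (k + 3)`; these
concatenations form `W (k + 1)`. The tail bound beats the number of windows as soon as `q k` is
large compared to `k ^ 2 * log (n (k + 3))`, which holds for `q k = 2 ^ (k + a)` with a large `a`,
as then `log (n k)` is only quadratic in `k`. So few words are discarded that the entropy of the
subshift of all sequences that are, at every level `k`, concatenations of words of `W k` stays
close to `log N`.

Since almost all concatenations are kept, the frequencies of a pattern in `W k`, read modulo `n j`,
are almost those in `W j` for `j ≤ k`. Along a sequence of the subshift a pattern therefore
correlates with `u` almost as an `n j`-periodic sequence does, that is, not at all, because `u` is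
aperiodic. Continuous functions are uniform limits of functions of finitely many coordinates.
-/

open Filter Topology

/-- The left shift on a two-sided sequence space. -/
def shift {α : Type*} (x : ℤ → α) : ℤ → α := fun n => x (n + 1)

open scoped BigOperators Finset

section Hoeffding

open MeasureTheory ProbabilityTheory

variable {ι α : Type*}

theorem integral_uniformOn_finset [MeasurableSpace α] [MeasurableSingletonClass α]
    (s : Finset α) (f : α → ℝ) : ∫ x, f x ∂uniformOn (s : Set α) = 𝔼 x ∈ s, f x := by
  have hint : IntegrableOn f s Measure.count := by
    rw [← (s : Set α).biUnion_of_singleton]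
    simp [integrableOn_finset_iUnion]
  rw [uniformOn, ProbabilityTheory.cond, integral_smul_measure, setIntegral_finset _ hint,
    Finset.expect_eq_sum_div_card]
  simp [measureReal_def, div_eq_inv_mul]

theorem measureReal_uniformOn_finset [MeasurableSpace α] [MeasurableSingletonClass α]
    (s : Finset α) (p : α → Prop) [DecidablePred p] :
    (uniformOn (s : Set α)).real {x | p x} = #{x ∈ s | p x} / #s := by
  classical
  have hp : (s : Set α) ∩ {x | p x} = ↑{x ∈ s | p x} := by ext; simp
  rw [measureReal_def, ← uniformOn_inter_self s.finite_toSet, hp, uniformOn_apply_finset,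
    Finset.inter_eq_right.2 (Finset.filter_subset _ _)]
  simp

variable [Fintype ι] [DecidableEq ι]

theorem card_filter_le_sum_le [Finite α] {s : Finset α} (hs : s.Nonempty) {X : ι → α → ℝ} {a t : ℝ}
    (hX : ∀ i, ∀ x ∈ s, |X i x| ≤ a) (hmean : ∀ i, 𝔼 x ∈ s, X i x = 0) (ht : 0 ≤ t) :
    (#{c ∈ Fintype.piFinset fun _ : ι => s | t ≤ ∑ i, X i (c i)} : ℝ) ≤
      Real.exp (-t ^ 2 / (2 * (Fintype.card ι * a ^ 2))) * (#s : ℝ) ^ Fintype.card ι := by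
  let _ : MeasurableSpace α := ⊤
  have : DiscreteMeasurableSpace α := ⟨fun _ => trivial⟩
  have := isProbabilityMeasure_uniformOn s.finite_toSet hs
  set P := Measure.pi fun _ : ι => uniformOn (s : Set α) with hP
  have hsub (i : ι) : HasSubgaussianMGF (fun c : ι → α => X i (c i)) (‖a‖₊ ^ 2) P := by
    refine HasSubgaussianMGF.of_map (Y := fun c : ι → α => c i) (X := X i)
      (measurable_pi_apply i).aemeasurable ?_
    rw [hP, (measurePreserving_eval _ i).map_eq]
    have hXi : ∀ᵐ x ∂uniformOn (s : Set α), X i x ∈ Set.Icc (-a) a := by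
      filter_upwards [ae_cond_mem s.measurableSet] with x hx using abs_le.1 (hX i x hx)
    convert hasSubgaussianMGF_of_mem_Icc_of_integral_eq_zero (by fun_prop) hXi
      (by rw [integral_uniformOn_finset, hmean i]) using 2
    ext
    simp [← two_mul]
  have hindep : iIndepFun (fun i (c : ι → α) => X i (c i)) P :=
    iIndepFun_pi fun i => by fun_prop
  have hoeffding := HasSubgaussianMGF.measure_sum_ge_le_of_iIndepFun hindep
    (s := Finset.univ) (fun i _ => hsub i) ht
  rw [hP, ← uniformOn_pi, ← Fintype.coe_piFinset, measureReal_uniformOn_finset,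
    Fintype.card_piFinset, Finset.prod_const, Finset.card_univ,
    div_le_iff₀ (by have := hs.card_pos; positivity)] at hoeffding
  simpa using hoeffding

theorem card_filter_lt_abs_sum_le [Finite α] {s : Finset α} (hs : s.Nonempty) {X : ι → α → ℝ}
    {a t : ℝ} (hX : ∀ i, ∀ x ∈ s, |X i x| ≤ a) (hmean : ∀ i, 𝔼 x ∈ s, X i x = 0) (ht : 0 ≤ t) :
    (#{c ∈ Fintype.piFinset fun _ : ι => s | t < |∑ i, X i (c i)|} : ℝ) ≤
      2 * Real.exp (-t ^ 2 / (2 * (Fintype.card ι * a ^ 2))) * (#s : ℝ) ^ Fintype.card ι := by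
  classical
  have hneg := card_filter_le_sum_le hs (X := fun i x => -X i x) (a := a)
    (by simpa using hX) (by simpa using hmean) ht
  have hpos := card_filter_le_sum_le hs hX hmean ht
  have hsub : {c ∈ Fintype.piFinset fun _ : ι => s | t < |∑ i, X i (c i)|} ⊆
      {c ∈ Fintype.piFinset fun _ : ι => s | t ≤ ∑ i, X i (c i)} ∪
        {c ∈ Fintype.piFinset fun _ : ι => s | t ≤ ∑ i, -X i (c i)} := by
    intro c
    simp only [Finset.mem_filter, Finset.mem_union, Finset.sum_neg_distrib, lt_abs]
    rintro ⟨hc, h | h⟩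
    exacts [.inl ⟨hc, h.le⟩, .inr ⟨hc, h.le⟩]
  have hcard := (Finset.card_le_card hsub).trans (Finset.card_union_le _ _)
  rify at hcard
  linarith

end Hoeffding

section Expect

variable {ι α : Type*}

theorem abs_expect_sub_expect_le {s p : Finset α} {f : α → ℝ} {τ : ℝ} (hs : s.Nonempty)
    (hsp : s ⊆ p) (hf0 : ∀ x ∈ p, 0 ≤ f x) (hf1 : ∀ x ∈ p, f x ≤ 1)
    (hcard : (1 - τ) * #p ≤ #s) : |𝔼 x ∈ s, f x - 𝔼 x ∈ p, f x| ≤ τ := by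
  classical
  have hs0 : (0 : ℝ) < #s := by exact_mod_cast hs.card_pos
  have hle : (#s : ℝ) ≤ #p := by exact_mod_cast Finset.card_le_card hsp
  have hp0 : (0 : ℝ) < #p := hs0.trans_le hle
  have hrest0 : 0 ≤ ∑ x ∈ p \ s, f x :=
    Finset.sum_nonneg fun x hx => hf0 x (Finset.mem_sdiff.1 hx).1
  have hrest1 : ∑ x ∈ p \ s, f x ≤ #p - #s := by
    rw [← Finset.cast_card_sdiff hsp]
    simpa using Finset.sum_le_sum fun x hx => hf1 x (Finset.mem_sdiff.1 hx).1
  have hmean0 : 0 ≤ 𝔼 x ∈ s, f x := Finset.expect_nonneg fun x hx => hf0 x (hsp hx)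
  have hmean1 : 𝔼 x ∈ s, f x ≤ 1 := Finset.expect_le hs fun x hx => hf1 x (hsp hx)
  have hdiff : 𝔼 x ∈ s, f x - 𝔼 x ∈ p, f x =
      ((𝔼 x ∈ s, f x) * (#p - #s) - ∑ x ∈ p \ s, f x) / #p := by
    rw [eq_div_iff hp0.ne', Finset.expect_eq_sum_div_card p, ← Finset.sum_sdiff hsp,
      Finset.expect_eq_sum_div_card s]
    field_simp
    ring
  rw [hdiff, abs_div, abs_of_pos hp0, div_le_iff₀ hp0, abs_le]
  constructor <;> nlinarith

theorem expect_piFinset_apply [Fintype ι] [DecidableEq ι] {s : Finset α} (hs : s.Nonempty)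
    (f : α → ℝ) (i : ι) : 𝔼 c ∈ Fintype.piFinset fun _ : ι => s, f (c i) = 𝔼 x ∈ s, f x := by
  have hs0 : (#s : ℝ) ≠ 0 := by exact_mod_cast hs.card_pos.ne'
  have hcard : Fintype.card ι = Fintype.card ι - 1 + 1 :=
    (Nat.sub_add_cancel (Fintype.card_pos_iff.2 ⟨i⟩)).symm
  rw [Finset.expect_eq_sum_div_card, Finset.expect_eq_sum_div_card,
    Fintype.sum_piFinset_apply, Fintype.card_piFinset, Finset.prod_const, Finset.card_univ, hcard,
    nsmul_eq_mul, Nat.add_sub_cancel, pow_succ]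
  push_cast
  exact mul_div_mul_left _ _ (pow_ne_zero _ hs0)

end Expect

section Words

variable {A : Type*} {n q r : ℕ}

/-- The word of length `n` of the sequence `x` at position `a`. -/
def word (x : ℤ → A) (a : ℤ) (n : ℕ) : Fin n → A := fun i => x (a + i)

/-- The division of a word of length `q * n` into `q` consecutive blocks of length `n`. -/
def blocks : (Fin (q * n) → A) ≃ (Fin q → Fin n → A) :=
  (finProdFinEquiv.arrowCongr (Equiv.refl A)).symm.trans (Equiv.curry (Fin q) (Fin n) A)

theorem blocks_apply (w : Fin (q * n) → A) (i : Fin q) (m : Fin n) :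
    blocks w i m = w (finProdFinEquiv (i, m)) :=
  rfl

theorem blocks_word (x : ℤ → A) (a : ℤ) (i : Fin q) :
    blocks (word x a (q * n)) i = word x (a + n * i) n := by
  funext m
  simp only [blocks_apply, word, finProdFinEquiv_apply_val]
  congr 1
  push_cast
  ring

open Classical in
/-- The indicator of an occurrence of the pattern `v` at position `m` of the word `w`; it is `0`
where the pattern would run over the end of `w`. -/
noncomputable def occ (v : Fin r → A) (w : Fin n → A) (m : ℕ) : ℝ :=
  if ∀ i : Fin r, ∃ h : m + i < n, w ⟨m + i, h⟩ = v i then 1 else 0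

theorem occ_nonneg (v : Fin r → A) (w : Fin n → A) (m : ℕ) : 0 ≤ occ v w m := by
  unfold occ; split_ifs <;> simp

theorem occ_le_one (v : Fin r → A) (w : Fin n → A) (m : ℕ) : occ v w m ≤ 1 := by
  unfold occ; split_ifs <;> simp

theorem occ_word (v : Fin r → A) (x : ℤ → A) (a : ℤ) {m : ℕ} (hm : m + r ≤ n) :
    occ v (word x a n) m = occ v (word x (a + m) r) 0 := by
  unfold occ word
  congr 1
  refine propext (forall_congr' fun i => ?_)
  have h : m + i < n := by omega
  simp only [h, i.isLt, exists_true_left, Nat.cast_add, zero_add, add_assoc]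

theorem occ_blocks (v : Fin r → A) (w : Fin (q * n) → A) (i : Fin q) {m : ℕ} (hm : m + r ≤ n) :
    occ v (blocks w i) m = occ v w (m + n * i) := by
  unfold occ
  congr 1
  refine propext (forall_congr' fun j => ?_)
  have h1 : m + j < n := by omega
  have h2 : m + n * i + j < q * n := by
    have := (finProdFinEquiv (i, (⟨m + j, h1⟩ : Fin n))).isLt
    simp only [finProdFinEquiv_apply_val] at this
    omega
  simp only [h1, h2, exists_true_left, blocks_apply]
  have : (finProdFinEquiv (i, (⟨m + j, h1⟩ : Fin n))) = ⟨m + n * i + j, h2⟩ := by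
    ext; simp only [finProdFinEquiv_apply_val]; omega
  rw [this]

/-- The proportion of the words of the code `W` in which the pattern `v` occurs at position `m`. -/
noncomputable def freq (v : Fin r → A) (W : Finset (Fin n → A)) (m : ℕ) : ℝ :=
  𝔼 w ∈ W, occ v w m

theorem freq_nonneg (v : Fin r → A) (W : Finset (Fin n → A)) (m : ℕ) : 0 ≤ freq v W m :=
  Finset.expect_nonneg fun w _ => occ_nonneg v w m

theorem freq_le_one (v : Fin r → A) (W : Finset (Fin n → A)) (m : ℕ) : freq v W m ≤ 1 := by
  obtain rfl | hW := W.eq_empty_or_nonempty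
  · simp [freq]
  · exact Finset.expect_le hW fun w _ => occ_le_one v w m

theorem abs_occ_sub_freq_le_one (v : Fin r → A) (w : Fin n → A) (W : Finset (Fin n → A)) (m : ℕ) :
    |occ v w m - freq v W m| ≤ 1 :=
  abs_sub_le_of_nonneg_of_le (occ_nonneg v w m) (occ_le_one v w m) (freq_nonneg v W m)
    (freq_le_one v W m)

end Words

section Refinement

variable {A : Type*} {n q r : ℕ} {u : ℕ → ℝ} {C : ℝ}

/-- The error term whose smallness makes words of a code almost uncorrelated to `u`: the
correlation of the fluctuations of the pattern `v` in the concatenation of `c` with the window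
of `u` that starts at `t`. -/
noncomputable def fluctuation (u : ℕ → ℝ) (v : Fin r → A) (W : Finset (Fin n → A)) (t : ℕ)
    (c : Fin q → Fin n → A) : ℝ :=
  ∑ i : Fin q, ∑ m : Fin n, (occ v (c i) m - freq v W m) * u (t + (m + n * i))

/-- A code `W'` of length `q * n` refines a code `W` of length `n` if its words are concatenations
of words of `W`, it misses at most a proportion `τ` of all of these, and in each of its words the
patterns of `P` fluctuate around their frequencies in `W` almost uncorrelatedly to all windows
of `u` that start at most at `T`. -/
structure IsRefinement (u : ℕ → ℝ) (P : Finset (Σ r, Fin r → A)) (T : ℕ) (δ τ : ℝ)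
    (W : Finset (Fin n → A)) (W' : Finset (Fin (q * n) → A)) : Prop where
  blocks_mem : ∀ w ∈ W', ∀ i, blocks w i ∈ W
  abs_fluctuation_le : ∀ w ∈ W', ∀ p ∈ P, ∀ t ≤ T,
    |fluctuation u p.2 W t (blocks w)| ≤ δ * (q * n)
  card_ge : (1 - τ) * (#W : ℝ) ^ q ≤ #W'

variable {W : Finset (Fin n → A)} {W' : Finset (Fin (q * n) → A)}
  {P : Finset (Σ r, Fin r → A)} {T : ℕ} {δ τ : ℝ}

theorem card_filter_lt_abs_fluctuation_le [Finite A] (hu : ∀ m, |u m| ≤ C) (hn : 0 < n)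
    (hW : W.Nonempty) (hδ : 0 ≤ δ) (v : Fin r → A) (t : ℕ) :
    (#{c ∈ Fintype.piFinset fun _ : Fin q => W | δ * (q * n) < |fluctuation u v W t c|} : ℝ) ≤
      2 * Real.exp (-(δ ^ 2 * q / (2 * C ^ 2))) * (#W : ℝ) ^ q := by
  have hbound (i : Fin q) (w) (_ : w ∈ W) :
      |∑ m : Fin n, (occ v w m - freq v W m) * u (t + (m + n * i))| ≤ n * C := by
    calc _ ≤ ∑ m : Fin n, |(occ v w m - freq v W m) * u (t + (m + n * i))| :=
          Finset.abs_sum_le_sum_abs _ _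
      _ ≤ ∑ _m : Fin n, C := Finset.sum_le_sum fun m _ => by
          rw [abs_mul, ← one_mul C]
          exact mul_le_mul (abs_occ_sub_freq_le_one v w W m) (hu _) (abs_nonneg _) zero_le_one
      _ = n * C := by simp
  have hmean (i : Fin q) :
      𝔼 w ∈ W, ∑ m : Fin n, (occ v w m - freq v W m) * u (t + (m + n * i)) = 0 := by
    rw [Finset.expect_sum_comm]
    refine Finset.sum_eq_zero fun m _ => ?_
    rw [← Finset.expect_mul, Finset.expect_sub_distrib, Finset.expect_const hW]
    simp [freq]
  refine (card_filter_lt_abs_sum_le hW hbound hmean (by positivity)).trans_eq ?_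
  have hexp : -(δ * (q * n)) ^ 2 / (2 * (Fintype.card (Fin q) * (n * C) ^ 2)) =
      -(δ ^ 2 * q / (2 * C ^ 2)) := by
    rw [Fintype.card_fin]
    rcases eq_or_ne (q : ℝ) 0 with hq | hq
    · simp [hq]
    rcases eq_or_ne C 0 with hC | hC
    · simp [hC]
    field_simp
  rw [hexp, Fintype.card_fin]

theorem le_card_filter_forall_abs_fluctuation_le [Finite A] (hu : ∀ m, |u m| ≤ C) (hn : 0 < n)
    (hW : W.Nonempty) (P : Finset (Σ r, Fin r → A)) (T : ℕ) (hδ : 0 ≤ δ) :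
    (1 - #P * (T + 1) * (2 * Real.exp (-(δ ^ 2 * q / (2 * C ^ 2))))) * (#W : ℝ) ^ q ≤
      #{c ∈ Fintype.piFinset fun _ : Fin q => W |
        ∀ p ∈ P, ∀ t ≤ T, |fluctuation u p.2 W t c| ≤ δ * (q * n)} := by
  classical
  set all := Fintype.piFinset fun _ : Fin q => W with hall
  set good := {c ∈ all | ∀ p ∈ P, ∀ t ≤ T, |fluctuation u p.2 W t c| ≤ δ * (q * n)} with hgood
  have hcover : all ⊆ good ∪ P.biUnion fun p => (Finset.range (T + 1)).biUnion fun t =>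
      {c ∈ all | δ * (q * n) < |fluctuation u p.2 W t c|} := by
    intro c hc
    by_contra! h
    simp only [Finset.mem_union, Finset.mem_biUnion, Finset.mem_filter, Finset.mem_range_succ_iff,
      hgood, hc, true_and, not_or, not_exists, not_and, not_lt] at h
    exact h.1 h.2
  have hunion : #all ≤ #good + ∑ p ∈ P, ∑ t ∈ Finset.range (T + 1),
      #{c ∈ all | δ * (q * n) < |fluctuation u p.2 W t c|} :=
    (Finset.card_le_card hcover).trans <| (Finset.card_union_le _ _).trans <|
      Nat.add_le_add_left (Finset.card_biUnion_le.trans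
        (Finset.sum_le_sum fun p _ => Finset.card_biUnion_le)) _
  have hbad : ∑ p ∈ P, ∑ t ∈ Finset.range (T + 1),
      (#{c ∈ all | δ * (q * n) < |fluctuation u p.2 W t c|} : ℝ) ≤
        #P * (T + 1) * (2 * Real.exp (-(δ ^ 2 * q / (2 * C ^ 2)))) * (#W : ℝ) ^ q := by
    refine (Finset.sum_le_sum fun p _ => Finset.sum_le_sum fun t _ =>
      card_filter_lt_abs_fluctuation_le hu hn hW hδ p.2 t).trans_eq ?_
    simp only [Finset.sum_const, Finset.card_range, nsmul_eq_mul]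
    push_cast
    ring
  have hall_card : (#all : ℝ) = (#W : ℝ) ^ q := by simp [hall]
  have hunion' := (Nat.cast_le (α := ℝ)).2 hunion
  simp only [Nat.cast_add, Nat.cast_sum] at hunion'
  linarith

theorem exists_isRefinement [Finite A] (hu : ∀ m, |u m| ≤ C) (hn : 0 < n) (hW : W.Nonempty)
    (P : Finset (Σ r, Fin r → A)) (T : ℕ) (hδ : 0 ≤ δ)
    (hτ : #P * (T + 1) * (2 * Real.exp (-(δ ^ 2 * q / (2 * C ^ 2)))) ≤ τ) :
    ∃ W' : Finset (Fin (q * n) → A), IsRefinement u P T δ τ W W' := by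
  classical
  refine ⟨{c ∈ Fintype.piFinset fun _ : Fin q => W | ∀ p ∈ P, ∀ t ≤ T,
    |fluctuation u p.2 W t c| ≤ δ * (q * n)}.map blocks.symm.toEmbedding, ?_, ?_, ?_⟩
  · intro w hw i
    rw [Finset.mem_map_equiv, Equiv.symm_symm, Finset.mem_filter] at hw
    exact Fintype.mem_piFinset.1 hw.1 i
  · intro w hw
    rw [Finset.mem_map_equiv, Equiv.symm_symm, Finset.mem_filter] at hw
    exact hw.2
  · rw [Finset.card_map]
    exact le_trans (by gcongr) (le_card_filter_forall_abs_fluctuation_le hu hn hW P T hδ)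

namespace IsRefinement

theorem map_blocks_subset (h : IsRefinement u P T δ τ W W') :
    W'.map blocks.toEmbedding ⊆ Fintype.piFinset fun _ : Fin q => W := by
  intro c hc
  rw [Finset.mem_map_equiv] at hc
  exact Fintype.mem_piFinset.2 fun i => by simpa using h.blocks_mem _ hc i

theorem abs_freq_sub_freq_le (h : IsRefinement u P T δ τ W W') (hW : W.Nonempty)
    (hW' : W'.Nonempty) (v : Fin r → A) (i : Fin q) {m : ℕ} (hm : m + r ≤ n) :
    |freq v W' (m + n * i) - freq v W m| ≤ τ := by
  have hmap : 𝔼 c ∈ W'.map blocks.toEmbedding, occ v (c i) m = freq v W' (m + n * i) := by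
    simp only [freq, Finset.expect_eq_sum_div_card, Finset.sum_map, Finset.card_map,
      Equiv.coe_toEmbedding, occ_blocks v _ i hm]
  rw [← hmap, freq, ← expect_piFinset_apply hW (fun w => occ v w m) i]
  exact abs_expect_sub_expect_le hW'.map h.map_blocks_subset (fun c _ => occ_nonneg v _ m)
    (fun c _ => occ_le_one v _ m) (by simpa using h.card_ge)

theorem nonempty (h : IsRefinement u P T δ τ W W') (hW : W.Nonempty) (hτ : τ < 1) :
    W'.Nonempty := by
  have hWq : (0 : ℝ) < (#W : ℝ) ^ q := pow_pos (by exact_mod_cast hW.card_pos) q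
  have := mul_pos (sub_pos.2 hτ) hWq
  exact Finset.card_pos.1 (by exact_mod_cast this.trans_le h.card_ge)

end IsRefinement

end Refinement

section BlockLength

/-- The length of the blocks of level `k` in a hierarchy in which every block of level `k + 1`
consists of `q k` blocks of level `k`. -/
def blockLength (q : ℕ → ℕ) : ℕ → ℕ
  | 0 => 1
  | k + 1 => q k * blockLength q k

variable {q : ℕ → ℕ}

theorem blockLength_pos (hq : ∀ k, 0 < q k) (k : ℕ) : 0 < blockLength q k := by
  induction k with
  | zero => exact one_pos
  | succ k ih => exact Nat.mul_pos (hq k) ih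

theorem blockLength_dvd_blockLength (q : ℕ → ℕ) {j k : ℕ} (hjk : j ≤ k) :
    blockLength q j ∣ blockLength q k := by
  induction k, hjk using Nat.le_induction with
  | base => exact dvd_rfl
  | succ k _ ih => exact ih.mul_left (q k)

theorem strictMono_blockLength (hq : ∀ k, 1 < q k) : StrictMono (blockLength q) :=
  strictMono_nat_of_lt_succ fun k =>
    lt_mul_of_one_lt_left (blockLength_pos (fun k => one_pos.trans (hq k)) k) (hq k)

theorem blockLength_two_pow_le (a k : ℕ) :
    blockLength (fun i => 2 ^ (i + a)) k ≤ 2 ^ (k * (k + a)) := by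
  induction k with
  | zero => simp [blockLength]
  | succ k ih =>
    calc blockLength (fun i => 2 ^ (i + a)) (k + 1) ≤ 2 ^ (k + a) * 2 ^ (k * (k + a)) :=
          Nat.mul_le_mul_left _ ih
      _ = 2 ^ ((k + a) + k * (k + a)) := (pow_add _ _ _).symm
      _ ≤ 2 ^ ((k + 1) * (k + 1 + a)) := Nat.pow_le_pow_right two_pos (by nlinarith)

theorem eventually_mul_pow_le_two_pow (b : ℝ) (d : ℕ) :
    ∀ᶠ s : ℕ in atTop, b * ((s : ℝ) + 1) ^ d ≤ 2 ^ s := by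
  have hlittle := (isLittleO_pow_const_const_pow_of_one_lt (R := ℝ) d (one_lt_two (α := ℝ))).def
    (show 0 < 1 / (2 * (|b| + 1)) by positivity)
  filter_upwards [(tendsto_add_atTop_nat 1).eventually hlittle] with s hs
  rw [Real.norm_of_nonneg (by positivity), Real.norm_of_nonneg (by positivity), pow_succ] at hs
  push_cast at hs
  calc b * ((s : ℝ) + 1) ^ d ≤ (|b| + 1) * ((s : ℝ) + 1) ^ d := by
        gcongr; linarith [le_abs_self b]
    _ ≤ (|b| + 1) * (1 / (2 * (|b| + 1)) * (2 ^ s * 2)) := by gcongr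
    _ = 2 ^ s := by field_simp

theorem eventually_growth_mul_exp_le {c : ℝ} (hc : 0 < c) :
    ∀ᶠ s : ℕ in atTop, ((s : ℝ) + 1) * (2 ^ (s + 3) ^ 2 + 1) *
      (2 * Real.exp (-(c * 2 ^ s / (s + 1) ^ 2))) ≤ (1 / 2) ^ (s + 1) := by
  filter_upwards [eventually_mul_pow_le_two_pow (16 / c) 4] with s hs
  have hexponent : ((s + (s + 3) ^ 2 + 3 + s : ℕ) : ℝ) ≤ c * 2 ^ s / (s + 1) ^ 2 := by
    rw [le_div_iff₀ (by positivity)]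
    rw [div_mul_eq_mul_div, div_le_iff₀ hc] at hs
    have hquad : ((s + (s + 3) ^ 2 + 3 + s : ℕ) : ℝ) ≤ 16 * ((s : ℝ) + 1) ^ 2 := by
      push_cast; nlinarith [(Nat.cast_nonneg s : (0 : ℝ) ≤ s)]
    calc _ ≤ 16 * ((s : ℝ) + 1) ^ 2 * (s + 1) ^ 2 := by gcongr
      _ ≤ c * 2 ^ s := by linarith
  have htwo : (2 : ℝ) ≤ Real.exp 1 := by linarith [Real.add_one_le_exp 1]
  have hexp : Real.exp (-(c * 2 ^ s / (s + 1) ^ 2)) ≤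
      (1 / 2) ^ (s + (s + 3) ^ 2 + 3 + s) := by
    rw [Real.exp_neg, one_div, inv_pow]
    gcongr
    calc (2 : ℝ) ^ (s + (s + 3) ^ 2 + 3 + s) ≤ Real.exp 1 ^ (s + (s + 3) ^ 2 + 3 + s) := by gcongr
      _ ≤ Real.exp (c * 2 ^ s / (s + 1) ^ 2) := by
        rw [← Real.exp_nat_mul, mul_one]; exact Real.exp_le_exp.2 hexponent
  have hs2 : (s : ℝ) + 1 ≤ 2 ^ s := mod_cast Nat.lt_two_pow_self
  have hone : (1 : ℝ) ≤ 2 ^ (s + 3) ^ 2 := one_le_pow₀ one_le_two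
  calc _ ≤ (2 : ℝ) ^ s * (2 ^ (s + 3) ^ 2 + 2 ^ (s + 3) ^ 2) *
        (2 * (1 / 2) ^ (s + (s + 3) ^ 2 + 3 + s)) := by gcongr
    _ = (1 / 2) ^ (s + 1) := by
      simp only [pow_add, one_div, inv_pow]
      field_simp
      norm_num

theorem exists_blockLength_mul_exp_le {c : ℝ} (hc : 0 < c) (K : ℕ) :
    ∃ q : ℕ → ℕ, (∀ k, K + k ≤ q k) ∧ ∀ k : ℕ, ((k : ℝ) + 1) * (blockLength q (k + 3) + 1) *
      (2 * Real.exp (-(c * q k / (k + 1) ^ 2))) ≤ (1 / 2) ^ (k + 1) := by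
  obtain ⟨a, ha⟩ := eventually_atTop.1
    ((eventually_growth_mul_exp_le hc).and (eventually_ge_atTop K))
  refine ⟨fun k => 2 ^ (k + a), fun k => ?_, fun k => ?_⟩
  · have := (ha a le_rfl).2
    exact (by omega : K + k ≤ k + a).trans Nat.lt_two_pow_self.le
  · obtain ⟨hs, -⟩ := ha (k + a) (Nat.le_add_left a k)
    have hlen : (blockLength (fun i => 2 ^ (i + a)) (k + 3) : ℝ) ≤ 2 ^ (k + a + 3) ^ 2 := by
      have := blockLength_two_pow_le a (k + 3)
      exact_mod_cast this.trans (Nat.pow_le_pow_right two_pos (by nlinarith))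
    have hk : (k : ℝ) ≤ (k + a : ℕ) := by exact_mod_cast Nat.le_add_right k a
    calc _ ≤ (((k + a : ℕ) : ℝ) + 1) * (2 ^ (k + a + 3) ^ 2 + 1) *
          (2 * Real.exp (-(c * 2 ^ (k + a) / ((k + a : ℕ) + 1) ^ 2))) := by
          push_cast at hk ⊢
          gcongr
      _ ≤ (1 / 2) ^ (k + a + 1) := hs
      _ ≤ (1 / 2) ^ (k + 1) := pow_le_pow_of_le_one (by norm_num) (by norm_num) (by omega)

end BlockLength

section Tower

variable {A : Type*} {u : ℕ → ℝ} {C : ℝ}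

/-- A hierarchy of codes, the code of each level refining the previous one, with error terms that
tend to zero. The windows of `u` that are controlled at level `k` are those that start within the
first block of level `k + 3`, so that they cover all scales up to the one where the next level
takes over. -/
structure IsTower (u : ℕ → ℝ) (P : ℕ → Finset (Σ r, Fin r → A)) (q : ℕ → ℕ)
    (W : ∀ k, Finset (Fin (blockLength q k) → A)) : Prop where
  nonempty : ∀ k, (W k).Nonempty
  isRefinement : ∀ k, IsRefinement u (P k) (blockLength q (k + 3)) (1 / (k + 1))
    ((1 / 2) ^ (k + 1)) (W k) (W (k + 1))

theorem exists_isTower_of_le [Fintype A] [Nonempty A] (hu : ∀ m, |u m| ≤ C)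
    {P : ℕ → Finset (Σ r, Fin r → A)} {q : ℕ → ℕ} (hq : ∀ k, 0 < q k)
    (hP : ∀ k, #(P k) * (blockLength q (k + 3) + 1) *
      (2 * Real.exp (-((1 / (k + 1)) ^ 2 * q k / (2 * C ^ 2)))) ≤ (1 / 2) ^ (k + 1)) :
    ∃ W : ∀ k, Finset (Fin (blockLength q k) → A), IsTower u P q W ∧ W 0 = Finset.univ := by
  have hstep (k : ℕ) (W : {W : Finset (Fin (blockLength q k) → A) // W.Nonempty}) :
      ∃ W' : {W' : Finset (Fin (blockLength q (k + 1)) → A) // W'.Nonempty},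
        IsRefinement u (P k) (blockLength q (k + 3)) (1 / (k + 1)) ((1 / 2) ^ (k + 1))
          W.1 W'.1 := by
    obtain ⟨W', hW'⟩ := exists_isRefinement hu (blockLength_pos hq k) W.2 (P k)
      (blockLength q (k + 3)) (by positivity) (hP k)
    exact ⟨⟨W', hW'.nonempty W.2 (pow_lt_one₀ (by norm_num) (by norm_num) k.succ_ne_zero)⟩, hW'⟩
  choose next hnext using hstep
  let W : ∀ k, {W : Finset (Fin (blockLength q k) → A) // W.Nonempty} :=
    Nat.rec ⟨Finset.univ, Finset.univ_nonempty⟩ next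
  exact ⟨fun k => (W k).1, ⟨fun k => (W k).2, fun k => hnext k (W k)⟩, rfl⟩

namespace IsTower

variable {P : ℕ → Finset (Σ r, Fin r → A)} {q : ℕ → ℕ}
  {W : ∀ k, Finset (Fin (blockLength q k) → A)}

theorem mul_log_card_sub_log_two_le (h : IsTower u P q W) (k : ℕ) :
    q k * Real.log #(W k) - Real.log 2 ≤ Real.log #(W (k + 1)) := by
  have hpow : (0 : ℝ) < (#(W k) : ℝ) ^ q k :=
    pow_pos (by exact_mod_cast (h.nonempty k).card_pos) _
  have hhalf : (1 / 2 : ℝ) ^ (k + 1) ≤ 1 / 2 :=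
    pow_le_of_le_one (by norm_num) (by norm_num) k.succ_ne_zero
  have hge : (1 - (1 / 2 : ℝ) ^ (k + 1)) * (#(W k) : ℝ) ^ q k ≤ #(W (k + 1)) :=
    (h.isRefinement k).card_ge
  have hcard : (#(W k) : ℝ) ^ q k / 2 ≤ #(W (k + 1)) := by nlinarith
  rw [← Real.log_pow, ← Real.log_div hpow.ne' two_ne_zero]
  exact Real.log_le_log (by positivity) hcard

theorem mul_le_log_card [Fintype A] (h : IsTower u P q W) (hW : W 0 = Finset.univ) {ε : ℝ}
    (hε : 0 ≤ ε) (hq : ∀ k, Real.log 2 ≤ (q k - 1) * ε) (k : ℕ) :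
    blockLength q k * (Real.log (Fintype.card A) - ε) ≤ Real.log #(W k) := by
  -- The additional `ε` absorbs the loss of `log 2` in each step.
  suffices blockLength q k * (Real.log (Fintype.card A) - ε) + ε ≤ Real.log #(W k) by linarith
  induction k with
  | zero =>
    rw [hW, Finset.card_univ, Fintype.card_pi_const]
    simp [blockLength]
  | succ k ih =>
    have hstep := h.mul_log_card_sub_log_two_le k
    have hmul := mul_le_mul_of_nonneg_left ih (Nat.cast_nonneg (α := ℝ) (q k))
    have hlen : (blockLength q (k + 1) : ℝ) = q k * blockLength q k := Nat.cast_mul _ _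
    rw [hlen]
    linarith [hq k]

end IsTower

theorem exists_isTower [Fintype A] [Nonempty A] (hC : 0 < C) (hu : ∀ m, |u m| ≤ C)
    {P : ℕ → Finset (Σ r, Fin r → A)} (hP : ∀ k, #(P k) ≤ k + 1) {ε : ℝ} (hε : 0 < ε) :
    ∃ (q : ℕ → ℕ) (W : ∀ k, Finset (Fin (blockLength q k) → A)), (∀ k, k + 2 ≤ q k) ∧
      IsTower u P q W ∧
      ∀ k, blockLength q k * (Real.log (Fintype.card A) - ε) ≤ Real.log #(W k) := by
  obtain ⟨K, hK⟩ := exists_nat_ge (Real.log 2 / ε)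
  obtain ⟨q, hqK, hq⟩ :=
    exists_blockLength_mul_exp_le (c := 1 / (2 * C ^ 2)) (by positivity) (K + 2)
  have hexp (k : ℕ) : (1 / ((k : ℝ) + 1)) ^ 2 * q k / (2 * C ^ 2) =
      1 / (2 * C ^ 2) * q k / (k + 1) ^ 2 := by
    field_simp
  obtain ⟨W, hW, hW0⟩ := exists_isTower_of_le (P := P) (q := q) hu
    (fun k => by have := hqK k; omega) fun k => by
      rw [hexp]
      refine le_trans ?_ (hq k)
      have : (#(P k) : ℝ) ≤ k + 1 := mod_cast hP k
      gcongr
  refine ⟨q, W, fun k => by have := hqK k; omega, hW, hW.mul_le_log_card hW0 hε.le fun k => ?_⟩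
  have hqk : (K : ℝ) + 1 ≤ q k := mod_cast (by have := hqK k; omega : K + 1 ≤ q k)
  rw [div_le_iff₀ hε] at hK
  nlinarith

end Tower

section Shift

variable {A : Type*}

theorem shift_surjective : Function.Surjective (shift : (ℤ → A) → ℤ → A) :=
  fun x => ⟨fun m => x (m - 1), funext fun m => congrArg x (add_sub_cancel_right m 1)⟩

theorem shift_iterate_apply (x : ℤ → A) (m : ℕ) (a : ℤ) : shift^[m] x a = x (a + m) := by
  induction m generalizing x with
  | zero => simp
  | succ m ih =>
    rw [Function.iterate_succ_apply, ih]
    simp only [shift, Nat.cast_succ, add_assoc]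

theorem word_shift (x : ℤ → A) (a : ℤ) (n : ℕ) : word (shift x) a n = word x (a + 1) n :=
  funext fun i => congrArg x (add_right_comm a i 1)

theorem word_shift_iterate (x : ℤ → A) (m : ℕ) (a : ℤ) (n : ℕ) :
    word (shift^[m] x) a n = word x (a + m) n :=
  funext fun i => (shift_iterate_apply x m _).trans (congrArg x (add_right_comm a i m))

theorem continuous_word [TopologicalSpace A] (a : ℤ) (n : ℕ) :
    Continuous fun x : ℤ → A => word x a n :=
  continuous_pi fun _ => continuous_apply _

end Shift

section Concatenation

variable {A : Type*} {n q : ℕ} {W : Finset (Fin n → A)} {W' : Finset (Fin (q * n) → A)}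
  {s : ℤ} {x : ℤ → A}

/-- The sequence `x` is a concatenation of words of the code `W`, with a cut at position `s`. -/
def IsConcat (W : Finset (Fin n → A)) (s : ℤ) (x : ℤ → A) : Prop :=
  ∀ i : ℤ, word x (s + i * n) n ∈ W

theorem IsConcat.add_mul (h : IsConcat W s x) (j : ℤ) : IsConcat W (s + j * n) x := fun i => by
  rw [add_assoc, ← _root_.add_mul]
  exact h (j + i)

theorem isConcat_shift : IsConcat W s (shift x) ↔ IsConcat W (s + 1) x := by
  simp only [IsConcat, word_shift, add_right_comm]

theorem IsRefinement.isConcat {u : ℕ → ℝ} {P : Finset (Σ r, Fin r → A)} {T : ℕ} {δ τ : ℝ}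
    (h : IsRefinement u P T δ τ W W') (hq : 0 < q) (hx : IsConcat W' s x) : IsConcat W s x := by
  intro i
  have hq' : (0 : ℤ) < q := by exact_mod_cast hq
  obtain ⟨b, hb⟩ := Int.eq_ofNat_of_zero_le (Int.emod_nonneg i hq'.ne')
  have hbq : b < q := by exact_mod_cast hb ▸ Int.emod_lt_of_pos i hq'
  have hpos : s + i * n = s + i / q * (q * n : ℕ) + n * b := by
    push_cast
    linear_combination (-n : ℤ) * Int.emod_add_mul_ediv i q + (n : ℤ) * hb
  rw [hpos, ← blocks_word x (s + i / q * (q * n : ℕ)) ⟨b, hbq⟩]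
  exact h.blocks_mem _ (hx (i / q)) ⟨b, hbq⟩

theorem exists_isConcat_zero (hn : 0 < n) {w : Fin n → A} (hw : w ∈ W) :
    ∃ x, IsConcat W 0 x ∧ word x 0 n = w := by
  have hn' : (0 : ℤ) < n := by exact_mod_cast hn
  have hmod (m : ℤ) : (m % n).toNat < n := by
    have := Int.emod_lt_of_pos m hn'
    omega
  have hword (i : ℤ) : word (fun m => w ⟨(m % n).toNat, hmod m⟩) (0 + i * n) n = w := by
    funext j
    have hj : (j : ℤ) % n = j := Int.emod_eq_of_lt (by positivity) (by exact_mod_cast j.isLt)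
    simp [word, add_comm, hj]
  exact ⟨_, fun i => (hword i).symm ▸ hw, by simpa using hword 0⟩

/-- The subshift of all concatenations of words of the code `W`. -/
def concatShift (W : Finset (Fin n → A)) : Set (ℤ → A) :=
  {x | ∃ s, IsConcat W s x}

theorem IsRefinement.concatShift_subset {u : ℕ → ℝ} {P : Finset (Σ r, Fin r → A)} {T : ℕ}
    {δ τ : ℝ} (h : IsRefinement u P T δ τ W W') (hq : 0 < q) : concatShift W' ⊆ concatShift W :=
  fun _ ⟨s, hs⟩ => ⟨s, h.isConcat hq hs⟩

theorem preimage_shift_concatShift (W : Finset (Fin n → A)) :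
    shift ⁻¹' concatShift W = concatShift W := by
  ext x
  simp only [concatShift, Set.mem_preimage, Set.mem_ofPred_eq, isConcat_shift]
  exact ((Equiv.addRight (1 : ℤ)).surjective.exists (p := fun s => IsConcat W s x)).symm

theorem exists_isConcat_of_mem_concatShift (hn : 0 < n) (hx : x ∈ concatShift W) :
    ∃ t : ℕ, 1 ≤ t ∧ t ≤ n ∧ IsConcat W t x := by
  obtain ⟨s, hs⟩ := hx
  have hn' : (0 : ℤ) < n := by exact_mod_cast hn
  obtain ⟨hpos, hle⟩ := toIocMod_mem_Ioc hn' 0 s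
  obtain ⟨t, ht⟩ := Int.eq_ofNat_of_zero_le hpos.le
  refine ⟨t, by omega, by omega, ?_⟩
  have hcut := hs.add_mul (-toIocDiv hn' 0 s)
  rwa [neg_mul, ← sub_eq_add_neg, ← smul_eq_mul, self_sub_toIocDiv_zsmul, ht] at hcut

theorem isClosed_concatShift [TopologicalSpace A] [DiscreteTopology A] (hn : 0 < n)
    (W : Finset (Fin n → A)) : IsClosed (concatShift W) := by
  have hW : concatShift W = ⋃ t ∈ Set.Iic n, {x | IsConcat W t x} := by
    ext x
    simp only [Set.mem_iUnion, exists_prop, Set.mem_Iic]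
    exact ⟨fun hx => (exists_isConcat_of_mem_concatShift hn hx).imp fun _ h => h.2,
      fun ⟨t, _, ht⟩ => ⟨t, ht⟩⟩
  rw [hW]
  refine (Set.finite_Iic n).isClosed_biUnion fun t _ => ?_
  simp only [IsConcat, Set.ofPred_forall]
  exact isClosed_iInter fun i => (isClosed_discrete (W : Set (Fin n → A))).preimage
    (continuous_word _ n)

end Concatenation

section TowerShift

variable {A : Type*} {u : ℕ → ℝ} {P : ℕ → Finset (Σ r, Fin r → A)} {q : ℕ → ℕ}
  {W : ∀ k, Finset (Fin (blockLength q k) → A)}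

/-- The subshift of all sequences that are concatenations of words of each code of a hierarchy. -/
def towerShift (W : ∀ k, Finset (Fin (blockLength q k) → A)) : Set (ℤ → A) :=
  ⋂ k, concatShift (W k)

theorem image_shift_towerShift (W : ∀ k, Finset (Fin (blockLength q k) → A)) :
    shift '' towerShift W = towerShift W := by
  have h : shift ⁻¹' towerShift W = towerShift W := by
    simp only [towerShift, Set.preimage_iInter, preimage_shift_concatShift]
  conv_lhs => rw [← h]
  exact Set.image_preimage_eq _ shift_surjective

theorem isClosed_towerShift [TopologicalSpace A] [DiscreteTopology A] (hq : ∀ k, 0 < q k)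
    (W : ∀ k, Finset (Fin (blockLength q k) → A)) : IsClosed (towerShift W) :=
  isClosed_iInter fun k => isClosed_concatShift (blockLength_pos hq k) (W k)

theorem IsTower.antitone_concatShift (h : IsTower u P q W) (hq : ∀ k, 0 < q k) :
    Antitone fun k => concatShift (W k) :=
  antitone_nat_of_succ_le fun k => (h.isRefinement k).concatShift_subset (hq k)

end TowerShift

section Entropy

variable {A : Type*}

/-- The words of length `m` that occur at position `0` of a sequence in `X`; for a subshift these
are all words of length `m` that occur in `X`. -/
def language (X : Set (ℤ → A)) (m : ℕ) : Set (Fin m → A) :=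
  (fun x => word x 0 m) '' X

theorem preimage_shift_iterate_concatShift {n : ℕ} (W : Finset (Fin n → A)) (m : ℕ) :
    shift^[m] ⁻¹' concatShift W = concatShift W := by
  induction m with
  | zero => rfl
  | succ m ih =>
    rw [Function.iterate_succ, Set.preimage_comp, ih, preimage_shift_concatShift]

theorem card_le_ncard_language_concatShift_pow [Finite A] {n m Q : ℕ} (hn : n = Q * m)
    (hpos : 0 < n) (W : Finset (Fin n → A)) :
    #W ≤ (language (concatShift W) m).ncard ^ Q := by
  subst hn
  have hmem (w : Fin (Q * m) → A) (hw : w ∈ W) (i : Fin Q) :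
      blocks w i ∈ language (concatShift W) m := by
    obtain ⟨x, hx, rfl⟩ := exists_isConcat_zero hpos hw
    refine ⟨shift^[m * i] x, ?_, ?_⟩
    · rw [← Set.mem_preimage, preimage_shift_iterate_concatShift]
      exact ⟨0, hx⟩
    · simp [word_shift_iterate, blocks_word]
  have hfin := (language (concatShift W) m).toFinite
  calc #W = #(W.map blocks.toEmbedding) := (Finset.card_map _).symm
    _ ≤ #(Fintype.piFinset fun _ : Fin Q => hfin.toFinset) :=
        Finset.card_le_card fun c hc => by
          obtain ⟨w, hw, rfl⟩ := Finset.mem_map.mp hc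
          simpa [Fintype.mem_piFinset] using hmem w hw
    _ = (language (concatShift W) m).ncard ^ Q := by
        rw [Fintype.card_piFinset_const, Set.ncard_eq_toFinset_card _ hfin]

theorem eventually_image_subset_image_iInter {X Y : Type*} [TopologicalSpace X] [CompactSpace X]
    [TopologicalSpace Y] [DiscreteTopology Y] [Finite Y] {f : X → Y} (hf : Continuous f)
    {K : ℕ → Set X} (hK : Antitone K) (hKc : ∀ k, IsClosed (K k)) :
    ∀ᶠ k in atTop, f '' K k ⊆ f '' ⋂ k, K k := by
  suffices ∀ y : Y, ∀ᶠ k in atTop, y ∈ f '' K k → y ∈ f '' ⋂ k, K k by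
    simpa only [Set.subset_def, eventually_all] using this
  intro y
  by_cases hy : y ∈ f '' ⋂ k, K k
  · simp [hy]
  have hclosed (k : ℕ) : IsClosed (K k ∩ f ⁻¹' {y}) :=
    (hKc k).inter ((isClosed_discrete {y}).preimage hf)
  obtain ⟨k, hk⟩ : ∃ k, y ∉ f '' K k := by
    by_contra! hcon
    obtain ⟨x, hx⟩ := IsCompact.nonempty_iInter_of_sequence_nonempty_isCompact_isClosed
      (fun k => K k ∩ f ⁻¹' {y}) (fun k => Set.inter_subset_inter_left _ (hK k.le_succ))
      (fun k => (hcon k).imp fun _ hx => hx) (hclosed 0).isCompact hclosed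
    rw [Set.mem_iInter] at hx
    exact hy ⟨x, Set.mem_iInter.mpr fun k => (hx k).1, (hx 0).2⟩
  filter_upwards [eventually_ge_atTop k] with j hj hyj
  exact absurd (Set.image_mono (hK hj) hyj) hk

theorem IsTower.exp_le_ncard_language [Finite A] {u : ℕ → ℝ} {P : ℕ → Finset (Σ r, Fin r → A)}
    {q : ℕ → ℕ} {W : ∀ k, Finset (Fin (blockLength q k) → A)} (h : IsTower u P q W)
    (hq : ∀ k, 0 < q k) {η : ℝ} (hη : ∀ k, blockLength q k * η ≤ Real.log #(W k)) (k : ℕ) :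
    Real.exp (blockLength q k * η) ≤ (language (towerShift W) (blockLength q k)).ncard := by
  let _ : TopologicalSpace A := ⊥
  have _ : DiscreteTopology A := ⟨rfl⟩
  obtain ⟨j, hsub, hkj⟩ := ((eventually_image_subset_image_iInter (continuous_word (A := A) 0 _)
    (h.antitone_concatShift hq) fun k => isClosed_concatShift (blockLength_pos hq k) (W k)).and
    (eventually_ge_atTop k)).exists
  obtain ⟨Q, hQ⟩ := blockLength_dvd_blockLength q hkj
  rw [mul_comm] at hQ
  set c := (language (towerShift W) (blockLength q k)).ncard
  have hcard : #(W j) ≤ c ^ Q :=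
    (card_le_ncard_language_concatShift_pow hQ (blockLength_pos hq j) (W j)).trans
      (Nat.pow_le_pow_left (Set.ncard_le_ncard hsub) Q)
  have hQpos : 0 < Q := Nat.pos_of_mul_pos_right (hQ ▸ blockLength_pos hq j)
  have hcpos : 0 < c :=
    Nat.pos_of_ne_zero fun hc => by
      simp [hc, hQpos.ne', (h.nonempty j).ne_empty] at hcard
  rw [← Real.le_log_iff_exp_le (by exact_mod_cast hcpos)]
  have hQpos' : (0 : ℝ) < Q := by exact_mod_cast hQpos
  refine le_of_mul_le_mul_left ?_ hQpos'
  calc (Q : ℝ) * (blockLength q k * η) = blockLength q j * η := by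
        rw [hQ, Nat.cast_mul, mul_assoc]
    _ ≤ Real.log #(W j) := hη j
    _ ≤ Real.log ((c : ℝ) ^ Q) :=
        Real.log_le_log (by exact_mod_cast (h.nonempty j).card_pos) (by exact_mod_cast hcard)
    _ = Q * Real.log c := Real.log_pow _ _

theorem ncard_language_le_coverMincard [Finite A] (X : Set (ℤ → A)) (n : ℕ) :
    ((language X n).ncard : ℕ∞) ≤ Dynamics.coverMincard shift X {p | p.1 0 = p.2 0} n := by
  refine le_iInf₂ fun s hs => ?_
  have hsub : language X n ⊆ language (s : Set (ℤ → A)) n := by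
    rintro _ ⟨x, hx, rfl⟩
    obtain ⟨y, hy, hxy⟩ := hs hx
    refine ⟨y, hy, funext fun i => ?_⟩
    have hi : shift^[i] x 0 = shift^[i] y 0 := Dynamics.mem_dynEntourage.mp hxy i i.isLt
    rw [shift_iterate_apply, shift_iterate_apply] at hi
    exact hi.symm
  have hcard := (Set.ncard_le_ncard hsub).trans (Set.ncard_image_le s.finite_toSet)
  rw [Set.ncard_coe_finset] at hcard
  exact_mod_cast hcard

theorem apply_eq_apply_mem_uniformity {ι A : Type*} [UniformSpace A] [DiscreteUniformity A]
    (i : ι) : {p : (ι → A) × (ι → A) | p.1 i = p.2 i} ∈ uniformity (ι → A) :=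
  Pi.uniformContinuous_proj (fun _ : ι => A) i
    (DiscreteUniformity.relId_mem_uniformity A)

theorem le_coverEntropy_shift [Finite A] [UniformSpace A] [DiscreteUniformity A]
    {X : Set (ℤ → A)} {η : ℝ}
    (h : ∃ᶠ n : ℕ in atTop, Real.exp (n * η) ≤ (language X n).ncard) :
    (η : EReal) ≤ Dynamics.coverEntropy shift X := by
  refine le_trans (Frequently.le_expGrowthSup (h.mono fun n hn => ?_))
    (Dynamics.coverEntropyEntourage_le_coverEntropy shift X (apply_eq_apply_mem_uniformity 0))
  refine le_trans ?_ (ENat.toENNReal_le.mpr (ncard_language_le_coverMincard X n))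
  have hmul : (η : EReal) * (n : ℕ) = ((n * η : ℝ) : EReal) := by
    rw [mul_comm]
    push_cast
    rfl
  have hn' : Real.exp (n * η) ≤ (((language X n).ncard : ℕ∞) : ENNReal).toReal := by
    rwa [ENat.toENNReal_coe, ENNReal.toReal_natCast]
  rw [hmul, EReal.exp_coe]
  exact ENNReal.ofReal_le_of_le_toReal hn'

theorem IsTower.le_coverEntropy_towerShift [Finite A] [UniformSpace A] [DiscreteUniformity A]
    {u : ℕ → ℝ} {P : ℕ → Finset (Σ r, Fin r → A)} {q : ℕ → ℕ}
    {W : ∀ k, Finset (Fin (blockLength q k) → A)} (h : IsTower u P q W) (hq : ∀ k, 1 < q k)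
    {η : ℝ} (hη : ∀ k, blockLength q k * η ≤ Real.log #(W k)) :
    (η : EReal) ≤ Dynamics.coverEntropy shift (towerShift W) :=
  le_coverEntropy_shift <| (strictMono_blockLength hq).tendsto_atTop.frequently <|
    Frequently.of_forall (h.exp_le_ncard_language (fun k => zero_lt_one.trans (hq k)) hη)

end Entropy

section MeanZero

/-- The Cesàro means `(h 1 + ⋯ + h M) / M` tend to zero. A sequence `u` is uncorrelated to a
sequence `g` if `HasMeanZero fun m => g m * u m`. -/
def HasMeanZero {𝕜 : Type*} [RCLike 𝕜] (h : ℕ → 𝕜) : Prop :=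
  Tendsto (fun M : ℕ => 1 / (M : 𝕜) * ∑ m ∈ Finset.Icc 1 M, h m) atTop (𝓝 0)

/-- The sequence `u` has mean zero along every arithmetic progression. -/
def IsAperiodic (u : ℕ → ℝ) : Prop :=
  ∀ a b : ℕ, 1 ≤ a → HasMeanZero fun m => u (a * m + b)

namespace HasMeanZero

variable {𝕜 : Type*} [RCLike 𝕜]

theorem const_mul {h : ℕ → 𝕜} (hh : HasMeanZero h) (c : 𝕜) : HasMeanZero fun m => c * h m := by
  simpa only [HasMeanZero, ← Finset.mul_sum, mul_left_comm _ c, mul_zero] using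
    Tendsto.const_mul c hh

theorem sum {ι : Type*} {s : Finset ι} {h : ι → ℕ → 𝕜} (hh : ∀ i ∈ s, HasMeanZero (h i)) :
    HasMeanZero fun m => ∑ i ∈ s, h i m := by
  have hsum := tendsto_finsetSum s hh
  rw [Finset.sum_const_zero] at hsum
  refine hsum.congr fun M => ?_
  rw [Finset.sum_comm, Finset.mul_sum]

theorem ofReal {h : ℕ → ℝ} (hh : HasMeanZero h) : HasMeanZero fun m => (h m : 𝕜) := by
  have hcast := (RCLike.continuous_ofReal (K := 𝕜)).continuousAt.tendsto.comp hh
  rw [RCLike.ofReal_zero] at hcast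
  refine hcast.congr fun M => ?_
  simp

theorem of_forall_exists_norm_sub_le {h : ℕ → 𝕜}
    (hh : ∀ η > 0, ∃ g : ℕ → 𝕜, HasMeanZero g ∧ ∀ m, ‖h m - g m‖ ≤ η) : HasMeanZero h := by
  refine Metric.tendsto_nhds.mpr fun η hη => ?_
  obtain ⟨g, hg, hgh⟩ := hh (η / 2) (half_pos hη)
  filter_upwards [Metric.tendsto_nhds.mp hg (η / 2) (half_pos hη)] with M hM
  rw [dist_zero_right] at hM ⊢
  have hdiff : ‖1 / (M : 𝕜) * ∑ m ∈ Finset.Icc 1 M, (h m - g m)‖ ≤ η / 2 := by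
    rw [norm_mul, norm_div, norm_one, RCLike.norm_natCast]
    calc _ ≤ 1 / (M : ℝ) * (M * (η / 2)) := by
          gcongr
          simpa using norm_sum_le_of_le (Finset.Icc 1 M) fun m _ => hgh m
      _ ≤ η / 2 := by
          rw [← mul_assoc]
          exact mul_le_of_le_one_left (half_pos hη).le
            (by simpa using inv_mul_le_one (a := (M : ℝ)))
  calc _ = ‖1 / (M : 𝕜) * ∑ m ∈ Finset.Icc 1 M, (h m - g m) +
        1 / (M : 𝕜) * ∑ m ∈ Finset.Icc 1 M, g m‖ := by
        rw [Finset.sum_sub_distrib, ← mul_add, sub_add_cancel]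
    _ < η / 2 + η / 2 := (norm_add_le _ _).trans_lt (add_lt_add_of_le_of_lt hdiff hM)
    _ = η := add_halves η

end HasMeanZero

theorem sum_range_ite_mod_eq {M d b : ℕ} (hb : b < d) (hbM : b ≤ M) (u : ℕ → ℝ) :
    ∑ m ∈ Finset.range (M + 1), (if m % d = b then u m else 0) =
      ∑ i ∈ Finset.range ((M - b) / d + 1), u (d * i + b) := by
  have hd : 0 < d := b.zero_le.trans_lt hb
  have hfilter : {m ∈ Finset.range (M + 1) | m % d = b} =
      (Finset.range ((M - b) / d + 1)).image fun i => d * i + b := by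
    ext m
    simp only [Finset.mem_filter, Finset.mem_range, Nat.lt_succ_iff, Finset.mem_image,
      Nat.le_div_iff_mul_le hd, Nat.le_sub_iff_add_le hbM, mul_comm _ d]
    constructor
    · rintro ⟨hm, rfl⟩
      exact ⟨m / d, (Nat.div_add_mod m d).trans_le hm, Nat.div_add_mod m d⟩
    · rintro ⟨i, hi, rfl⟩
      exact ⟨hi, by rw [Nat.mul_add_mod, Nat.mod_eq_of_lt hb]⟩
  rw [← Finset.sum_filter, hfilter, Finset.sum_image]
  exact fun i _ j _ hij => Nat.eq_of_mul_eq_mul_left hd (Nat.add_right_cancel hij)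

theorem sum_Icc_one_eq_sum_range_sub {G : Type*} [AddCommGroup G] (f : ℕ → G) (M : ℕ) :
    ∑ m ∈ Finset.Icc 1 M, f m = ∑ m ∈ Finset.range (M + 1), f m - f 0 := by
  rw [Finset.range_eq_Ico, Finset.sum_eq_sum_Ico_succ_bot M.succ_pos, add_sub_cancel_left]
  rfl

namespace IsAperiodic

variable {u : ℕ → ℝ}

theorem hasMeanZero_ite_mod_eq (hu : IsAperiodic u) {d b : ℕ} (hb : b < d) :
    HasMeanZero fun m => if m % d = b then u m else 0 := by
  have hd : 0 < d := b.zero_le.trans_lt hb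
  set c := u b - if 0 % d = b then u 0 else 0
  have hlim : Tendsto (fun M : ℕ => |1 / (((M - b) / d : ℕ) : ℝ) *
      ∑ i ∈ Finset.Icc 1 ((M - b) / d), u (d * i + b)| + |c| * (1 / (M : ℝ))) atTop (𝓝 0) := by
    have hcount : Tendsto (fun M : ℕ => (M - b) / d) atTop atTop :=
      (Nat.tendsto_div_const_atTop hd.ne').comp (tendsto_sub_atTop_nat b)
    simpa using ((hu d b hd).comp hcount).abs.add
      ((tendsto_one_div_atTop_nhds_zero_nat (𝕜 := ℝ)).const_mul |c|)
  refine squeeze_zero_norm' ?_ hlim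
  filter_upwards [eventually_ge_atTop b] with M hM
  set K := (M - b) / d
  have hsum : ∑ m ∈ Finset.Icc 1 M, (if m % d = b then u m else 0) =
      ∑ i ∈ Finset.Icc 1 K, u (d * i + b) + c := by
    rw [sum_Icc_one_eq_sum_range_sub, sum_Icc_one_eq_sum_range_sub, sum_range_ite_mod_eq hb hM,
      mul_zero, zero_add]
    exact (sub_add_sub_cancel _ _ _).symm
  have hKM : 1 / (M : ℝ) * |∑ i ∈ Finset.Icc 1 K, u (d * i + b)| ≤
      1 / (K : ℝ) * |∑ i ∈ Finset.Icc 1 K, u (d * i + b)| := by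
    rcases K.eq_zero_or_pos with hK0 | hK0
    · simp [hK0]
    have hKM : K ≤ M := (Nat.div_le_self _ _).trans (Nat.sub_le _ _)
    gcongr
  rw [hsum, Real.norm_eq_abs, abs_mul, abs_mul, abs_of_nonneg (by positivity : 0 ≤ 1 / (M : ℝ)),
    abs_of_nonneg (by positivity : 0 ≤ 1 / (K : ℝ)), mul_comm |c|]
  refine (mul_le_mul_of_nonneg_left (abs_add_le _ _) (by positivity)).trans ?_
  rw [mul_add]
  gcongr

theorem hasMeanZero_zmod_mul (hu : IsAperiodic u) {d : ℕ} [NeZero d] (F : ZMod d → ℝ) :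
    HasMeanZero fun m => F m * u m := by
  refine (HasMeanZero.sum (s := Finset.univ) fun b _ =>
    (hu.hasMeanZero_ite_mod_eq (ZMod.val_lt b)).const_mul (F b)).congr fun M => ?_
  congr 1
  refine Finset.sum_congr rfl fun m _ => ?_
  beta_reduce
  rw [Finset.sum_eq_single_of_mem (m : ZMod d) (Finset.mem_univ _), ZMod.val_natCast, if_pos rfl]
  intro b _ hb
  rw [if_neg, mul_zero]
  rw [← ZMod.val_natCast]
  exact fun h => hb (ZMod.val_injective d h).symm

end IsAperiodic

theorem abs_sum_Icc_le_of_abs_sum_window_le {h : ℕ → ℝ} {H η : ℝ} {n t M : ℕ}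
    (hH : ∀ m, |h m| ≤ H) (hη : 0 ≤ η) (hn : 0 < n) (ht1 : 1 ≤ t) (htn : t ≤ n)
    (hw : ∀ i : ℕ, t + n * i ≤ M → |∑ j ∈ Finset.range n, h (t + n * i + j)| ≤ η * n) :
    |∑ m ∈ Finset.Icc 1 M, h m| ≤ η * M + 2 * H * n := by
  have hH0 : 0 ≤ H := (abs_nonneg _).trans (hH 0)
  set D := (M + 1 - t) / n
  have hDn : n * D ≤ M + 1 - t := Nat.mul_div_le _ n
  have hlt : M + 1 - t < n * D + n := Nat.lt_mul_div_succ _ hn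
  have hwindows (k : ℕ) (hk : k ≤ D) :
      |∑ m ∈ Finset.Ico t (t + n * k), h m| ≤ η * (n * k : ℕ) := by
    induction k with
    | zero => simp
    | succ k ih =>
      have hle : n * (k + 1) ≤ n * D := Nat.mul_le_mul_left n hk
      rw [mul_add_one] at hle ⊢
      have hwk := hw k (by omega)
      rw [← Finset.sum_Ico_consecutive h (Nat.le_add_right t (n * k))
        (Nat.add_le_add_left (Nat.le_add_right _ n) t), Nat.cast_add, mul_add]
      refine (abs_add_le _ _).trans (add_le_add (ih (by omega)) ?_)
      rwa [Finset.sum_Ico_eq_sum_range, ← add_assoc, Nat.add_sub_cancel_left]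
  have hsub : Finset.Ico t (t + n * D) ⊆ Finset.Icc 1 M := fun m hm => by
    rw [Finset.mem_Ico] at hm
    exact Finset.mem_Icc.mpr ⟨by omega, by omega⟩
  have hrest : |∑ m ∈ Finset.Icc 1 M \ Finset.Ico t (t + n * D), h m| ≤ 2 * H * n := by
    have hcard : #(Finset.Icc 1 M \ Finset.Ico t (t + n * D)) ≤ 2 * n := by
      rw [Finset.card_sdiff_of_subset hsub, Nat.card_Icc, Nat.card_Ico]
      omega
    calc _ ≤ #(Finset.Icc 1 M \ Finset.Ico t (t + n * D)) • H :=
          (Finset.abs_sum_le_sum_abs _ _).trans (Finset.sum_le_card_nsmul _ _ _ fun m _ => hH m)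
      _ ≤ (2 * n) • H := nsmul_le_nsmul_left hH0 hcard
      _ = 2 * H * n := by
        rw [nsmul_eq_mul]
        push_cast
        ring
  have hmain : η * (n * D : ℕ) ≤ η * M := by
    have : n * D ≤ M := by omega
    gcongr
  rw [← Finset.sum_sdiff hsub]
  linarith [abs_add_le (∑ m ∈ Finset.Icc 1 M \ Finset.Ico t (t + n * D), h m)
    (∑ m ∈ Finset.Ico t (t + n * D), h m), hwindows D le_rfl]

theorem card_filter_lt_mod_add_le {d n : ℕ} (hd : 0 < d) (hdn : d ∣ n) (r : ℕ) :
    #{m ∈ Finset.range n | d < m % d + r} ≤ n / d * r := by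
  have hsub : {m ∈ Finset.range n | d < m % d + r} ⊆
      (Finset.range (n / d) ×ˢ Finset.Ico (d - r) d).image fun p => d * p.1 + p.2 := by
    intro m hm
    rw [Finset.mem_filter, Finset.mem_range] at hm
    refine Finset.mem_image.mpr ⟨(m / d, m % d), ?_, Nat.div_add_mod m d⟩
    have hlt := Nat.mod_lt m hd
    simp only [Finset.mem_product, Finset.mem_range, Finset.mem_Ico]
    exact ⟨Nat.div_lt_div_of_lt_of_dvd hdn hm.1, by omega, hlt⟩
  calc _ ≤ #(Finset.range (n / d) ×ˢ Finset.Ico (d - r) d) :=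
        (Finset.card_le_card hsub).trans Finset.card_image_le
    _ ≤ n / d * r := by
        rw [Finset.card_product, Finset.card_range, Nat.card_Ico]
        exact Nat.mul_le_mul_left _ (by omega)

end MeanZero

section Correlation

variable {A : Type*} {u : ℕ → ℝ} {C : ℝ} {r : ℕ} {v : Fin r → A} {x : ℤ → A}

theorem sum_range_mul {G : Type*} [AddCommMonoid G] (f : ℕ → G) (q n : ℕ) :
    ∑ j ∈ Finset.range (q * n), f j = ∑ i : Fin q, ∑ m : Fin n, f (m + n * i) := by
  rw [Finset.sum_range, ← finProdFinEquiv.sum_comp, Fintype.sum_prod_type]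
  simp only [finProdFinEquiv_apply_val]

theorem add_le_of_mod_add_le {d n m r : ℕ} (hdn : d ∣ n) (hm : m < n) (hr : m % d + r ≤ d) :
    m + r ≤ n := by
  have hdiv := Nat.mul_le_mul_left d (Nat.div_lt_div_of_lt_of_dvd hdn hm)
  rw [Nat.mul_div_cancel' hdn, Nat.mul_succ] at hdiv
  have := Nat.div_add_mod m d
  omega

/-- Up to `κ`, the frequency of the pattern `v` at a position in the words of the code `W` depends
only on the residue of the position modulo `d`, and is then given by `F`. Positions where the
pattern straddles two blocks of length `d` are exempt. -/
structure IsPeriodicApprox (v : Fin r → A) {n : ℕ} (W : Finset (Fin n → A)) {d : ℕ}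
    (F : ZMod d → ℝ) (κ : ℝ) : Prop where
  nonneg : ∀ b, 0 ≤ F b
  le_one : ∀ b, F b ≤ 1
  abs_freq_sub_le : ∀ m < n, m % d + r ≤ d → |freq v W m - F m| ≤ κ

section Window

variable {n d : ℕ} {W : Finset (Fin n → A)} {F : ZMod d → ℝ} {κ : ℝ}

theorem IsPeriodicApprox.abs_sub_le (h : IsPeriodicApprox v W F κ) (hdn : d ∣ n) (hκ : 0 ≤ κ)
    (s : ℤ) {m : ℕ} (hm : m < n) :
    |(occ v (word x (s + m) r) 0 - F m) - (occ v (word x s n) m - freq v W m)| ≤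
      κ + if d < m % d + r then 2 else 0 := by
  split_ifs with hr
  · have hx := abs_le.mp (abs_sub_le_of_nonneg_of_le (occ_nonneg v (word x (s + m) r) 0)
      (occ_le_one v _ 0) (h.nonneg m) (h.le_one m))
    have hW := abs_le.mp (abs_occ_sub_freq_le_one v (word x s n) W m)
    exact abs_le.mpr ⟨by linarith, by linarith⟩
  · rw [not_lt] at hr
    rw [occ_word v x s (add_le_of_mod_add_le hdn hm hr), sub_sub_sub_cancel_left, add_zero]
    exact h.abs_freq_sub_le m hm hr

theorem IsPeriodicApprox.abs_sum_block_le (h : IsPeriodicApprox v W F κ) (hd : 0 < d)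
    (hdn : d ∣ n) (hκ : 0 ≤ κ) (s : ℤ) {g : ℕ → ℝ}
    (hg : ∀ m, |g m| ≤ C) :
    |∑ m : Fin n, ((occ v (word x (s + m) r) 0 - F m) -
        (occ v (word x s n) m - freq v W m)) * g m| ≤ C * (κ + 2 * r / d) * n := by
  have hC : 0 ≤ C := (abs_nonneg _).trans (hg 0)
  have hd' : (0 : ℝ) < d := by exact_mod_cast hd
  have hbad : ∑ m ∈ Finset.range n, (if d < m % d + r then (2 : ℝ) else 0) ≤ 2 * r / d * n := by
    have hcard : (#{m ∈ Finset.range n | d < m % d + r} : ℝ) ≤ n / d * r := by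
      rw [← Nat.cast_div hdn hd'.ne']
      exact_mod_cast card_filter_lt_mod_add_le hd hdn r
    rw [← Finset.sum_filter, Finset.sum_const, nsmul_eq_mul]
    calc _ ≤ (n / d * r * 2 : ℝ) := by gcongr
      _ = 2 * r / d * n := by ring
  calc _ ≤ ∑ m : Fin n, (κ + if d < m % d + r then 2 else 0) * C :=
        (Finset.abs_sum_le_sum_abs _ _).trans <| Finset.sum_le_sum fun m _ => by
          rw [abs_mul]
          exact mul_le_mul (h.abs_sub_le hdn hκ s m.isLt) (hg m) (abs_nonneg _)
            (by positivity)
    _ = (n * κ + ∑ m ∈ Finset.range n, if d < m % d + r then 2 else 0) * C := by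
        rw [← Finset.sum_mul, Finset.sum_add_distrib, Finset.sum_range]
        simp
    _ ≤ (n * κ + 2 * r / d * n) * C := by gcongr
    _ = C * (κ + 2 * r / d) * n := by ring

theorem IsRefinement.abs_sum_window_le {q : ℕ} {P : Finset (Σ r, Fin r → A)} {T : ℕ} {δ τ : ℝ}
    {W' : Finset (Fin (q * n) → A)} (hWW' : IsRefinement u P T δ τ W W') (hv : ⟨r, v⟩ ∈ P)
    (hu : ∀ m, |u m| ≤ C) (h : IsPeriodicApprox v W F κ) (hd : 0 < d)
    (hdn : d ∣ n) (hκ : 0 ≤ κ) {t : ℕ} (ht : t ≤ T)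
    (hx : word x t (q * n) ∈ W') :
    |∑ j ∈ Finset.range (q * n), (occ v (word x (t + j) r) 0 - F j) * u (t + j)| ≤
      (δ + C * (κ + 2 * r / d)) * (q * n) := by
  have hfluct := hWW'.abs_fluctuation_le _ hx ⟨r, v⟩ hv t ht
  set main := fluctuation u v W t (blocks (word x t (q * n))) with hmain
  have hblock (i : Fin q) : |∑ m : Fin n,
      ((occ v (word x ((t + n * i : ℤ) + m) r) 0 - F m) -
        (occ v (word x (t + n * i) n) m - freq v W m)) * u (t + (m + n * i))| ≤
      C * (κ + 2 * r / d) * n :=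
    h.abs_sum_block_le hd hdn hκ _ fun m => hu (t + (m + n * i))
  have hsplit : ∑ j ∈ Finset.range (q * n), (occ v (word x (t + j) r) 0 - F j) * u (t + j) =
      main + ∑ i : Fin q, ∑ m : Fin n, ((occ v (word x ((t + n * i : ℤ) + m) r) 0 - F m) -
        (occ v (word x (t + n * i) n) m - freq v W m)) * u (t + (m + n * i)) := by
    have hn : (n : ZMod d) = 0 := (ZMod.natCast_eq_zero_iff n d).mpr hdn
    rw [sum_range_mul, hmain, fluctuation, ← Finset.sum_add_distrib]
    refine Finset.sum_congr rfl fun i _ => ?_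
    rw [← Finset.sum_add_distrib]
    refine Finset.sum_congr rfl fun m _ => ?_
    have hpos : (t + (m + n * i : ℕ) : ℤ) = t + n * i + m := by
      push_cast
      ring
    rw [blocks_word, hpos, Nat.cast_add, Nat.cast_mul, hn, zero_mul, add_zero]
    ring
  rw [hsplit, add_mul]
  refine (abs_add_le _ _).trans (add_le_add hfluct ?_)
  refine (Finset.abs_sum_le_sum_abs _ _).trans ((Finset.sum_le_sum fun i _ => hblock i).trans_eq ?_)
  rw [Finset.sum_const, Finset.card_univ, Fintype.card_fin, nsmul_eq_mul]
  ring

end Window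

namespace IsTower

variable {P : ℕ → Finset (Σ r, Fin r → A)} {q : ℕ → ℕ}
  {W : ∀ k, Finset (Fin (blockLength q k) → A)}

theorem abs_freq_sub_freq_le (h : IsTower u P q W) (hq : ∀ k, 0 < q k) {k l : ℕ} (hkl : k ≤ l)
    (v : Fin r → A) {m : ℕ} (hm : m < blockLength q l)
    (hr : m % blockLength q k + r ≤ blockLength q k) :
    |freq v (W l) m - freq v (W k) (m % blockLength q k)| ≤ (1 / 2) ^ k - (1 / 2) ^ l := by
  induction l, hkl using Nat.le_induction generalizing m with
  | base => simp [Nat.mod_eq_of_lt hm]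
  | succ l hkl ih =>
    have hdvd := blockLength_dvd_blockLength q hkl
    have hlt := Nat.mod_lt m (blockLength_pos hq l)
    have hmod := Nat.mod_mod_of_dvd m hdvd
    have hih := ih hlt (by rwa [hmod])
    rw [hmod] at hih
    have hmr : m % blockLength q l + r ≤ blockLength q l :=
      add_le_of_mod_add_le hdvd hlt (by rwa [hmod])
    have hi : m / blockLength q l < q l := Nat.div_lt_of_lt_mul (by rwa [mul_comm])
    have hstep : |freq v (W (l + 1)) (m % blockLength q l + blockLength q l * (m / blockLength q l))
        - freq v (W l) (m % blockLength q l)| ≤ (1 / 2) ^ (l + 1) :=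
      (h.isRefinement l).abs_freq_sub_freq_le (h.nonempty l) (h.nonempty (l + 1)) v ⟨_, hi⟩ hmr
    rw [Nat.mod_add_div] at hstep
    have htri := abs_sub_le (freq v (W (l + 1)) m) (freq v (W l) (m % blockLength q l))
      (freq v (W k) (m % blockLength q k))
    have hpow : (1 / 2 : ℝ) ^ l = 2 * (1 / 2) ^ (l + 1) := by ring
    linarith

theorem isPeriodicApprox (h : IsTower u P q W) (hq : ∀ k, 0 < q k) {k l : ℕ} (hkl : k ≤ l)
    (v : Fin r → A) :
    IsPeriodicApprox v (W l) (fun b : ZMod (blockLength q k) => freq v (W k) b.val)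
      ((1 / 2) ^ k) where
  nonneg b := freq_nonneg v (W k) b.val
  le_one b := freq_le_one v (W k) b.val
  abs_freq_sub_le m hm hr := by
    rw [ZMod.val_natCast]
    exact (h.abs_freq_sub_freq_le hq hkl v hm hr).trans (sub_le_self _ (by positivity))

theorem abs_sum_Icc_le (h : IsTower u P q W) (hq : ∀ k, 0 < q k) (hu : ∀ m, |u m| ≤ C)
    {j k M : ℕ} (hjk : j ≤ k) (hv : ⟨r, v⟩ ∈ P k) (hx : x ∈ concatShift (W (k + 1)))
    (hM : M ≤ blockLength q (k + 3)) : ∃ b : ZMod (blockLength q j),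
      |∑ m ∈ Finset.Icc 1 M, (occ v (word x m r) 0 - freq v (W j) (m - b).val) * u m| ≤
        (1 / (k + 1) + C * ((1 / 2) ^ j + 2 * r / blockLength q j)) * M +
          2 * C * blockLength q (k + 1) := by
  have hC : 0 ≤ C := (abs_nonneg _).trans (hu 0)
  obtain ⟨t, ht1, htn, ht⟩ := exists_isConcat_of_mem_concatShift (blockLength_pos hq (k + 1)) hx
  have hzero : (blockLength q (k + 1) : ZMod (blockLength q j)) = 0 :=
    (ZMod.natCast_eq_zero_iff _ _).mpr (blockLength_dvd_blockLength q (by omega))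
  refine ⟨t, abs_sum_Icc_le_of_abs_sum_window_le (n := blockLength q (k + 1)) (t := t) (fun m => ?_)
    (by positivity) (blockLength_pos hq (k + 1)) ht1 htn fun i hi => ?_⟩
  · rw [abs_mul, ← one_mul C]
    exact mul_le_mul (abs_sub_le_of_nonneg_of_le (occ_nonneg _ _ _) (occ_le_one _ _ _)
      (freq_nonneg _ _ _) (freq_le_one _ _ _)) (hu m) (abs_nonneg _) zero_le_one
  have hword : word x (t + blockLength q (k + 1) * i : ℕ) (q k * blockLength q k) ∈ W (k + 1) := by
    have hti := ht i
    rw [mul_comm] at hti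
    exact_mod_cast hti
  have hwindow := (h.isRefinement k).abs_sum_window_le hv hu (h.isPeriodicApprox hq hjk v)
    (blockLength_pos hq j) (blockLength_dvd_blockLength q hjk) (by positivity) (hi.trans hM) hword
  have hlen : (blockLength q (k + 1) : ℝ) = q k * blockLength q k := Nat.cast_mul _ _
  rw [hlen]
  refine le_of_eq_of_le ?_ hwindow
  congr 1
  refine Finset.sum_congr rfl fun m _ => ?_
  have hsub : ((t + blockLength q (k + 1) * i + m : ℕ) : ZMod (blockLength q j)) - t = m := by
    push_cast
    rw [hzero]
    ring
  rw [hsub]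
  push_cast
  rfl

end IsTower

end Correlation

section TowerMean

variable {A : Type*} {u : ℕ → ℝ} {C : ℝ} {r : ℕ} {v : Fin r → A} {x : ℤ → A}
  {P : ℕ → Finset (Σ r, Fin r → A)} {q : ℕ → ℕ} {W : ∀ k, Finset (Fin (blockLength q k) → A)}

theorem exists_le_and_lt_succ_of_strictMono {a : ℕ → ℕ} (ha : StrictMono a) {j M : ℕ}
    (hj : a j ≤ M) : ∃ k, j ≤ k ∧ a k ≤ M ∧ M < a (k + 1) := by
  refine ⟨Nat.findGreatest (a · ≤ M) M, Nat.le_findGreatest (ha.le_apply.trans hj) hj,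
    Nat.findGreatest_spec (P := (a · ≤ M)) (ha.le_apply.trans hj) hj, ?_⟩
  by_contra! hM
  exact (Nat.lt_succ_self _).not_ge (Nat.le_findGreatest (ha.le_apply.trans hM) hM)

namespace IsTower

theorem abs_mean_le (h : IsTower u P q W) (hq : ∀ k, k + 2 ≤ q k) (hu : ∀ m, |u m| ≤ C)
    {j M : ℕ} (hv : ∀ k ≥ j, ⟨r, v⟩ ∈ P k) (hx : x ∈ towerShift W)
    (hM : blockLength q (j + 2) ≤ M) : ∃ b : ZMod (blockLength q j),
      |1 / (M : ℝ) * ∑ m ∈ Finset.Icc 1 M, occ v (word x m r) 0 * u m| ≤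
        (1 + 2 * C) / (j + 1) + C * ((1 / 2) ^ j + 2 * r / blockLength q j) +
          |1 / (M : ℝ) * ∑ m ∈ Finset.Icc 1 M, freq v (W j) (m - b).val * u m| := by
  have hC : 0 ≤ C := (abs_nonneg _).trans (hu 0)
  have hq0 (k : ℕ) : 0 < q k := by have := hq k; omega
  obtain ⟨l, hjl, hlM, hMl⟩ := exists_le_and_lt_succ_of_strictMono
    (strictMono_blockLength fun k => by have := hq k; omega) hM
  obtain ⟨k, rfl⟩ := Nat.exists_eq_add_of_le' (le_add_self.trans hjl)
  have hjk : j ≤ k := by omega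
  obtain ⟨b, hb⟩ := h.abs_sum_Icc_le hq0 hu hjk (hv k hjk) (Set.mem_iInter.mp hx (k + 1)) hMl.le
  refine ⟨b, ?_⟩
  have hMpos : (0 : ℝ) < M := by exact_mod_cast (blockLength_pos hq0 _).trans_le hM
  -- The blocks of level `k + 1` are short compared to `M`, so that the boundary terms are small.
  have hshort : (blockLength q (k + 1) : ℝ) ≤ 1 / (k + 1) * M := by
    rw [one_div_mul_eq_div, le_div_iff₀ (by positivity)]
    have hqk : k + 1 ≤ q (k + 1) := by have := hq (k + 1); omega
    have := (Nat.mul_le_mul_right (blockLength q (k + 1)) hqk).trans hlM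
    rw [mul_comm]
    exact_mod_cast this
  have herror : |∑ m ∈ Finset.Icc 1 M, (occ v (word x m r) 0 - freq v (W j) (m - b).val) * u m| ≤
      ((1 + 2 * C) / (j + 1) + C * ((1 / 2) ^ j + 2 * r / blockLength q j)) * M := by
    have hkj : (1 + 2 * C) / ((k : ℝ) + 1) * M ≤ (1 + 2 * C) / (j + 1) * M := by gcongr
    have hbound : 2 * C * blockLength q (k + 1) ≤ 2 * C * (1 / (k + 1) * M) := by gcongr
    have hsum : (1 + 2 * C) / ((k : ℝ) + 1) * M = 1 / (k + 1) * M + 2 * C * (1 / (k + 1) * M) := by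
      ring
    linarith
  have hsplit : ∑ m ∈ Finset.Icc 1 M, occ v (word x m r) 0 * u m =
      ∑ m ∈ Finset.Icc 1 M, (occ v (word x m r) 0 - freq v (W j) (m - b).val) * u m +
        ∑ m ∈ Finset.Icc 1 M, freq v (W j) (m - b).val * u m := by
    rw [← Finset.sum_add_distrib]
    exact Finset.sum_congr rfl fun m _ => by ring
  rw [hsplit, mul_add]
  refine (abs_add_le _ _).trans ?_
  gcongr
  rwa [abs_mul, abs_of_pos (one_div_pos.mpr hMpos), one_div_mul_eq_div, div_le_iff₀ hMpos]

theorem hasMeanZero_occ_mul (h : IsTower u P q W) (hq : ∀ k, k + 2 ≤ q k) (hu : ∀ m, |u m| ≤ C)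
    (hap : IsAperiodic u) (hv : ∀ᶠ k in atTop, ⟨r, v⟩ ∈ P k) (hx : x ∈ towerShift W) :
    HasMeanZero fun m => occ v (word x m r) 0 * u m := by
  have hq1 (k : ℕ) : 1 < q k := by have := hq k; omega
  have herror : Tendsto (fun j : ℕ => (1 + 2 * C) / ((j : ℝ) + 1) +
      C * ((1 / 2 : ℝ) ^ j + 2 * r / blockLength q j)) atTop (𝓝 0) := by
    have hpow := tendsto_pow_atTop_nhds_zero_of_lt_one (r := (1 / 2 : ℝ)) (by norm_num)
      (by norm_num)
    have hlen := ((tendsto_const_div_atTop_nhds_zero_nat (2 * r : ℝ)).comp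
      (strictMono_blockLength hq1).tendsto_atTop)
    have hlevel :=
      (tendsto_const_div_atTop_nhds_zero_nat (1 + 2 * C)).comp (tendsto_add_atTop_nat 1)
    simpa [Function.comp_def] using hlevel.add ((hpow.add hlen).const_mul C)
  refine Metric.tendsto_nhds.mpr fun η hη => ?_
  obtain ⟨j, hj, hvj⟩ := ((herror.eventually (gt_mem_nhds (half_pos hη))).and
    (eventually_forall_ge_atTop.mpr hv)).exists
  have : NeZero (blockLength q j) := ⟨(blockLength_pos (fun k => zero_lt_one.trans (hq1 k)) j).ne'⟩
  have hphase : ∀ᶠ M : ℕ in atTop, ∀ b : ZMod (blockLength q j),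
      |1 / (M : ℝ) * ∑ m ∈ Finset.Icc 1 M, freq v (W j) (m - b).val * u m| < η / 2 :=
    eventually_all.mpr fun b => (Metric.tendsto_nhds.mp
      (hap.hasMeanZero_zmod_mul fun c => freq v (W j) (c - b).val) (η / 2) (half_pos hη)).mono
        fun M hM => by rwa [Real.dist_0_eq_abs] at hM
  filter_upwards [hphase, eventually_ge_atTop (blockLength q (j + 2))] with M hphaseM hM
  obtain ⟨b, hb⟩ := h.abs_mean_le hq hu hvj hx hM
  rw [Real.dist_0_eq_abs]
  linarith [hphaseM b]

end IsTower

end TowerMean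

section Observable

variable {A : Type*} {X : Set (ℤ → A)}

theorem exists_forall_dist_lt_of_word_eq [UniformSpace A] [CompactSpace A] {E : Type*}
    [PseudoMetricSpace E] (hX : IsClosed X) (f : C(X, E)) {η : ℝ} (hη : 0 < η) :
    ∃ r n : ℕ, ∀ x y : X, word x.1 (-r) n = word y.1 (-r) n → dist (f x) (f y) < η := by
  have : CompactSpace X := isCompact_iff_compactSpace.mp hX.isCompact
  have hf := CompactSpace.uniformContinuous_of_continuous f.continuous
    (Metric.dist_mem_uniformity hη)
  rw [mem_map, uniformity_subtype, mem_comap] at hf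
  obtain ⟨t, ht, htf⟩ := hf
  rw [Pi.uniformity, mem_iInf] at ht
  obtain ⟨I, hI, V, hV, rfl⟩ := ht
  obtain ⟨r, hr⟩ : ∃ r : ℕ, ∀ i ∈ I, i.natAbs ≤ r :=
    ⟨hI.toFinset.sup Int.natAbs, fun i hi => Finset.le_sup (hI.mem_toFinset.mpr hi)⟩
  refine ⟨r, 2 * r + 1, fun x y hxy => htf (a := (x, y)) (Set.mem_iInter.mpr fun i => ?_)⟩
  obtain ⟨T, hT, hTV⟩ := mem_comap.mp (hV i)
  refine hTV ?_
  have hi := hr i i.2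
  have hxyi : x.1 i = y.1 i := by
    have hcoord := congrFun hxy ⟨(i + r : ℤ).toNat, by omega⟩
    have hpos : -(r : ℤ) + (i + r : ℤ).toNat = i := by omega
    simpa only [word, hpos] using hcoord
  exact (congrArg (fun a => (x.1 i, a) ∈ T) hxyi).mp (refl_mem_uniformity hT)

theorem exists_forall_dist_apply_word_lt [UniformSpace A] [CompactSpace A] {E : Type*}
    [PseudoMetricSpace E] [Nonempty E] (hX : IsClosed X) (f : C(X, E)) {η : ℝ} (hη : 0 < η) :
    ∃ (r n : ℕ) (c : (Fin n → A) → E), ∀ x : X, dist (f x) (c (word x.1 (-r) n)) < η := by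
  obtain ⟨r, n, hrn⟩ := exists_forall_dist_lt_of_word_eq hX f hη
  have hc (w : Fin n → A) : ∃ z, ∀ x : X, word x.1 (-r) n = w → dist (f x) z < η := by
    by_cases hw : ∃ y : X, word y.1 (-r) n = w
    · obtain ⟨y, rfl⟩ := hw
      exact ⟨f y, fun x => hrn x y⟩
    · exact ⟨Classical.arbitrary E, fun x hx => (hw ⟨x, hx⟩).elim⟩
  choose c hc using hc
  exact ⟨r, n, c, fun x => hc _ x rfl⟩

open Classical in
theorem occ_zero_eq_ite {n : ℕ} (v w : Fin n → A) : occ v w 0 = if w = v then 1 else 0 := by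
  simp [occ, funext_iff]

theorem coe_iterate_restrict {α : Type*} {s : Set α} {g : α → α} (h : Set.MapsTo g s s) (m : ℕ)
    (x : s) : ((h.restrict g s s)^[m] x : α) = g^[m] x := by
  rw [h.iterate_restrict]
  rfl

theorem hasMeanZero_apply_word_mul [Finite A] {𝕜 : Type*} [RCLike 𝕜] {u : ℕ → ℝ} {n : ℕ}
    {x : ℤ → A} (h : ∀ v : Fin n → A, HasMeanZero fun m => occ v (word x m n) 0 * u m)
    (c : (Fin n → A) → 𝕜) : HasMeanZero fun m => c (word x m n) * (u m : 𝕜) := by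
  classical
  have := Fintype.ofFinite A
  convert HasMeanZero.sum (s := Finset.univ) fun v _ => ((h v).ofReal (𝕜 := 𝕜)).const_mul (c v)
    with m
  simp [occ_zero_eq_ite, apply_ite]

theorem hasMeanZero_iterate_restrict_mul [Finite A] [UniformSpace A] {𝕜 : Type*} [RCLike 𝕜]
    {u : ℕ → ℝ} {C : ℝ} (hu : ∀ m, |u m| ≤ C) (hX : IsClosed X) (hmaps : Set.MapsTo shift X X)
    (hsurj : Set.SurjOn shift X X)
    (hocc : ∀ x ∈ X, ∀ (n : ℕ) (v : Fin n → A), HasMeanZero fun m => occ v (word x m n) 0 * u m)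
    (f : C(X, 𝕜)) (x : X) :
    HasMeanZero fun m => f ((hmaps.restrict shift X X)^[m] x) * (u m : 𝕜) := by
  refine .of_forall_exists_norm_sub_le fun η hη => ?_
  have hC : 0 ≤ C := (abs_nonneg _).trans (hu 0)
  obtain ⟨r, n, c, hc⟩ :=
    exists_forall_dist_apply_word_lt hX f (div_pos hη (by linarith : 0 < C + 1))
  obtain ⟨y, hy, hyx⟩ := hsurj.iterate r x.2
  refine ⟨_, hasMeanZero_apply_word_mul (hocc y hy n) c, fun m => ?_⟩
  have hword : word (((hmaps.restrict shift X X)^[m] x : X) : ℤ → A) (-r) n = word y m n := by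
    rw [coe_iterate_restrict, word_shift_iterate, ← hyx, word_shift_iterate,
      neg_add_cancel_comm]
  have hcm := hc ((hmaps.restrict shift X X)^[m] x)
  rw [hword, dist_eq_norm] at hcm
  rw [← sub_mul, norm_mul, RCLike.norm_ofReal]
  calc _ ≤ η / (C + 1) * (C + 1) := by
        gcongr
        exact (hu m).trans (by linarith)
    _ = η := div_mul_cancel₀ _ (by linarith)

end Observable

theorem exists_card_le_and_forall_eventually_mem (α : Type*) [Countable α] [Nonempty α] :
    ∃ P : ℕ → Finset α, (∀ k, #(P k) ≤ k + 1) ∧ ∀ a, ∀ᶠ k in atTop, a ∈ P k := by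
  classical
  obtain ⟨e, he⟩ := exists_surjective_nat α
  refine ⟨fun k => (Finset.range (k + 1)).image e, fun k =>
    Finset.card_image_le.trans_eq (Finset.card_range _), fun a => ?_⟩
  obtain ⟨i, rfl⟩ := he a
  filter_upwards [eventually_ge_atTop i] with k hk
  exact Finset.mem_image_of_mem e (Finset.mem_range_succ_iff.mpr hk)

theorem downarowicz_serafin_general {A 𝕜 : Type*} [Fintype A] [Nonempty A] [UniformSpace A]
    [DiscreteUniformity A] [RCLike 𝕜] {u : ℕ → ℝ} {C : ℝ} (hu : ∀ m, |u m| ≤ C)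
    (hap : IsAperiodic u) {ε : ℝ} (hε : 0 < ε) :
    ∃ X : Set (ℤ → A), IsClosed X ∧ shift '' X = X ∧ ∃ hmaps : Set.MapsTo shift X X,
      ((Real.log (Fintype.card A) - ε : ℝ) : EReal) < Dynamics.coverEntropy shift X ∧
      ∀ (f : C(X, 𝕜)) (x : X),
        HasMeanZero fun m => f ((hmaps.restrict shift X X)^[m] x) * (u m : 𝕜) := by
  have : Nonempty (Σ r, Fin r → A) := ⟨⟨0, Fin.elim0⟩⟩
  obtain ⟨P, hPcard, hPmem⟩ := exists_card_le_and_forall_eventually_mem (Σ r, Fin r → A)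
  have hu' (m : ℕ) : |u m| ≤ |C| + 1 := by linarith [hu m, le_abs_self C]
  obtain ⟨q, W, hq, hW, hcard⟩ := exists_isTower (by positivity) hu' hPcard (half_pos hε)
  have hclosed := isClosed_towerShift (fun k => by have := hq k; omega) W
  have himage := image_shift_towerShift W
  have hmaps := Set.mapsTo_iff_image_subset.mpr himage.subset
  refine ⟨towerShift W, hclosed, himage, hmaps, ?_, hasMeanZero_iterate_restrict_mul hu hclosed
    hmaps himage.superset fun x hx n v => hW.hasMeanZero_occ_mul hq hu hap (hPmem ⟨n, v⟩) hx⟩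
  exact (EReal.coe_lt_coe (by linarith)).trans_le
    (hW.le_coverEntropy_towerShift (fun k => by have := hq k; omega) hcard)

/-- Downarowicz–Serafin: fix `N ≥ 2` and let `u : ℕ → ℝ` be bounded and aperiodic. Then
for every `ε > 0` there exists a subshift `X ⊆ {0,…,N−1}^ℤ` (closed and shift-invariant)
of topological entropy greater than `log N − ε` which is uncorrelated to `u`. -/
theorem downarowicz_serafin (N : ℕ) (hN : 2 ≤ N) (u : ℕ → ℝ) (C : ℝ)
    (hbd : ∀ n : ℕ, |u n| ≤ C)
    (haper : ∀ a b : ℕ, 1 ≤ a →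
      Tendsto (fun M : ℕ => (1 / (M : ℝ)) * ∑ m ∈ Finset.Icc 1 M, u (a * m + b))
        atTop (nhds 0))
    (ε : ℝ) (hε : 0 < ε) :
    ∃ X : Set (ℤ → ↥(Set.Iio N)), IsClosed X ∧ shift '' X = X ∧
      ∃ hinv : Set.MapsTo shift X X,
        ((Real.log N - ε : ℝ) : EReal) < Dynamics.coverEntropy shift X ∧
        ∀ (f : C(X, ℂ)) (x : X),
          Tendsto
            (fun M : ℕ => (1 / (M : ℂ)) *
              ∑ m ∈ Finset.Icc 1 M,
                f ((Set.MapsTo.restrict shift X X hinv)^[m] x) * (u m : ℂ))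
            atTop (nhds 0) := by
  have : Nonempty (Set.Iio N) := ⟨⟨0, by simpa using zero_lt_two.trans_le hN⟩⟩
  have hcard : Fintype.card (Set.Iio N) = N := by simp
  have hexists := downarowicz_serafin_general (A := Set.Iio N) (𝕜 := ℂ) hbd haper hε
  rwa [hcard] at hexists
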